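/- arXiv:2207.10838 — 3 statements merged into one kernel-verified Lean document; each statement's English description precedes it below -/
import Mathlib

section
/- Let Ω̂ be a finite set, let ψ : ℝ^p → (Ω̂ → ℂ) be differentiable in β and nowhere vanishing with Σ_{x ∈ Ω̂} |ψ_β(x)|² = 1 for all β, and for θ = (log α, β) with α > 0 define u_θ(x) = α ψ_β(x). With respect to the inner product ⟨u, v⟩ = Σ_{x ∈ Ω̂} conj(u(x)) v(x), the matrix M_ab(θ) = Re⟨∂u_θ/∂θ_a, ∂u_θ/∂θ_b⟩ (indices a, b ∈ {0, 1, ..., p}, with θ_0 = log α) satisfies: M_00 = α², M_{0,i} = M_{i,0} = α² Re E_{x∼ρ_β}[σ_β(x)_i] for i ∈ {1,...,p}, and M_{i,j} = α² Re E_{x∼ρ_β}[conj(σ_β(x)_i) σ_β(x)_j] for i, j ∈ {1,...,p}, where ρ_β(x) = |ψ_β(x)|² and σ_β(x) = (∇_β ψ_β(x))/ψ_β(x). -/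
/-!
The product rule gives `∂U/∂θ₀ = α ψ` and `∂U/∂θᵢ = α ∂ψ/∂βᵢ` (`fderiv_exp_mul_tail`). Since `ψ`
vanishes nowhere, `∂ψ/∂βᵢ = ψ σᵢ`, so each summand of `M` carries the factor `α² conj(ψ) ψ = α² ρ`.
Normalization `∑ ρ = 1` gives the `(0,0)` entry, and the `(i,0)` entry is the complex conjugate of
the `(0,i)` one, hence has the same real part.
-/

/-- Product rule for `t ↦ exp(t₀) f(t₁, …, t_p)`, evaluated in the direction `v`. -/
lemma fderiv_exp_mul_tail {p : ℕ} (f : (Fin p → ℝ) → ℂ) (hf : Differentiable ℝ f)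
    (θ v : Fin (p + 1) → ℝ) :
    fderiv ℝ (fun t : Fin (p + 1) → ℝ =>
        (Real.exp (t 0) : ℂ) * f (fun i : Fin p => t i.succ)) θ v =
      (Real.exp (θ 0) : ℂ) * ((v 0 : ℂ) * f (fun k : Fin p => θ k.succ) +
        fderiv ℝ f (fun k : Fin p => θ k.succ) (fun k : Fin p => v k.succ)) := by
  have h0 : HasFDerivAt (fun t : Fin (p + 1) → ℝ => t 0)
      (ContinuousLinearMap.proj (R := ℝ) (φ := fun _ : Fin (p + 1) => ℝ) 0) θ :=
    (ContinuousLinearMap.proj (R := ℝ) (φ := fun _ : Fin (p + 1) => ℝ) 0).hasFDerivAt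
  have h1 := Complex.ofRealCLM.hasFDerivAt.comp θ h0.exp
  have h2 : HasFDerivAt (fun (t : Fin (p + 1) → ℝ) (i : Fin p) => t i.succ)
      (ContinuousLinearMap.pi fun i : Fin p =>
        ContinuousLinearMap.proj (R := ℝ) (φ := fun _ : Fin (p + 1) => ℝ) i.succ) θ :=
    (ContinuousLinearMap.pi fun i : Fin p =>
        ContinuousLinearMap.proj (R := ℝ) (φ := fun _ : Fin (p + 1) => ℝ) i.succ).hasFDerivAt
  have h3 := (hf (fun k : Fin p => θ k.succ)).hasFDerivAt.comp θ h2
  have h4 : HasFDerivAt (fun t : Fin (p + 1) → ℝ =>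
      (Real.exp (t 0) : ℂ) * f (fun i : Fin p => t i.succ)) _ θ := h1.mul h3
  have h5 : (ContinuousLinearMap.pi fun i : Fin p =>
        ContinuousLinearMap.proj (R := ℝ) (φ := fun _ : Fin (p + 1) => ℝ) i.succ) v =
      fun k : Fin p => v k.succ := rfl
  rw [h4.fderiv]
  simp [h5]
  ring

/-- **Stochastic form of the mass matrix for the rescaled ansatz `u_θ = α ψ_β`.**
With augmented parameters `θ = (log α, β)`, trial state `U θ x = exp(θ 0) * ψ β x`
(`α = exp(θ 0) > 0`, `β = tail of θ`), and
`M a b = Re⟪∂U/∂θ a, ∂U/∂θ b⟫` in the inner product `⟪u, v⟫ = ∑ x, conj(u x) v x`,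
one has `M 0 0 = α²`, `M 0 i = M i 0 = α² Re 𝔼_{x∼ρ}[σ i x]` and
`M i j = α² Re 𝔼_{x∼ρ}[conj(σ i x) σ j x]`, where `ρ x = |ψ β x|²` and
`σ i x = ∂ψ β x/∂β i / ψ β x`. -/
theorem rescaled_ansatz_mass_matrix
    {X : Type*} [Fintype X] {p : ℕ}
    (ψ : (Fin p → ℝ) → X → ℂ)
    (hdiff : ∀ x : X, Differentiable ℝ (fun β => ψ β x))
    (hne : ∀ (β : Fin p → ℝ) (x : X), ψ β x ≠ 0)
    (hnorm : ∀ β : Fin p → ℝ, ∑ x : X, ‖ψ β x‖ ^ 2 = 1)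
    (θ : Fin (p + 1) → ℝ)
    (U : (Fin (p + 1) → ℝ) → X → ℂ)
    (hU : ∀ t x, U t x = (Real.exp (t 0) : ℂ) * ψ (fun i : Fin p => t i.succ) x)
    (M : Fin (p + 1) → Fin (p + 1) → ℝ)
    (hM : ∀ a b, M a b =
      (∑ x : X, (starRingEnd ℂ) (fderiv ℝ (fun t => U t x) θ (Pi.single a 1)) *
        fderiv ℝ (fun t => U t x) θ (Pi.single b 1)).re) :
    M 0 0 = Real.exp (θ 0) ^ 2 ∧
    (∀ i : Fin p,
      M 0 i.succ = Real.exp (θ 0) ^ 2 *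
        (∑ x : X, ((‖ψ (fun k : Fin p => θ k.succ) x‖ ^ 2 : ℝ) : ℂ) *
          (fderiv ℝ (fun b => ψ b x) (fun k : Fin p => θ k.succ) (Pi.single i 1) /
            ψ (fun k : Fin p => θ k.succ) x)).re ∧
      M i.succ 0 = Real.exp (θ 0) ^ 2 *
        (∑ x : X, ((‖ψ (fun k : Fin p => θ k.succ) x‖ ^ 2 : ℝ) : ℂ) *
          (fderiv ℝ (fun b => ψ b x) (fun k : Fin p => θ k.succ) (Pi.single i 1) /
            ψ (fun k : Fin p => θ k.succ) x)).re) ∧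
    (∀ i j : Fin p,
      M i.succ j.succ = Real.exp (θ 0) ^ 2 *
        (∑ x : X, ((‖ψ (fun k : Fin p => θ k.succ) x‖ ^ 2 : ℝ) : ℂ) *
          ((starRingEnd ℂ)
              (fderiv ℝ (fun b => ψ b x) (fun k : Fin p => θ k.succ) (Pi.single i 1) /
                ψ (fun k : Fin p => θ k.succ) x) *
            (fderiv ℝ (fun b => ψ b x) (fun k : Fin p => θ k.succ) (Pi.single j 1) /
              ψ (fun k : Fin p => θ k.succ) x))).re) := by
  have hUx : ∀ x, (fun t => U t x) = fun t : Fin (p + 1) → ℝ =>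
      (Real.exp (t 0) : ℂ) * ψ (fun i : Fin p => t i.succ) x := fun x => funext fun t => hU t x
  simp only [hUx] at hM
  have hD : ∀ x v, _ = _ := fun x v => fderiv_exp_mul_tail (fun β => ψ β x) (hdiff x) θ v
  simp only [hD] at hM
  have hz : (fun k : Fin p => (Pi.single 0 1 : Fin (p + 1) → ℝ) k.succ) = 0 := by
    ext k; simp
  have hs : ∀ i : Fin p, (fun k : Fin p => (Pi.single i.succ 1 : Fin (p + 1) → ℝ) k.succ) =
      Pi.single i 1 := by
    intro i; ext k; simp [Pi.single_apply]
  have hs0 : ∀ i : Fin p, (Pi.single i.succ 1 : Fin (p + 1) → ℝ) 0 = 0 := by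
    intro i; simp [(Fin.succ_ne_zero i).symm]
  have hρ : ∀ x, ((‖ψ (fun k : Fin p => θ k.succ) x‖ ^ 2 : ℝ) : ℂ) =
      (starRingEnd ℂ) (ψ (fun k : Fin p => θ k.succ) x) * ψ (fun k : Fin p => θ k.succ) x := by
    intro x; rw [Complex.conj_mul']; push_cast; rfl
  have hx := hne (fun k : Fin p => θ k.succ)
  have hc : ∀ x, (starRingEnd ℂ) (ψ (fun k : Fin p => θ k.succ) x) ≠ 0 := fun x =>
    (map_ne_zero _).2 (hx x)
  have h0i : ∀ i : Fin p, M 0 i.succ = Real.exp (θ 0) ^ 2 *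
        (∑ x : X, ((‖ψ (fun k : Fin p => θ k.succ) x‖ ^ 2 : ℝ) : ℂ) *
          (fderiv ℝ (fun b => ψ b x) (fun k : Fin p => θ k.succ) (Pi.single i 1) /
            ψ (fun k : Fin p => θ k.succ) x)).re := by
    intro i
    rw [hM, ← Complex.re_ofReal_mul, Finset.mul_sum]
    congr 1
    refine Finset.sum_congr rfl fun x _ => ?_
    rw [hρ, hz, hs, hs0]
    have := hx x
    simp only [Pi.single_eq_same, map_zero, map_mul, Complex.conj_ofReal, Complex.ofReal_one,
      Complex.ofReal_zero, Complex.ofReal_pow]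
    field_simp
    simp [mul_comm]
  -- `M` is symmetric: swapping the indices conjugates every summand.
  have hsymm : ∀ a b, M a b = M b a := by
    intro a b
    rw [hM, hM, ← Complex.conj_re, map_sum]
    congr 1
    refine Finset.sum_congr rfl fun x _ => ?_
    rw [map_mul, Complex.conj_conj, mul_comm]
  refine ⟨?_, fun i => ⟨h0i i, (hsymm _ _).trans (h0i i)⟩, fun i j => ?_⟩
  · have h : ((Real.exp (θ 0) ^ 2 : ℝ) : ℂ) * ((∑ x : X,
        ‖ψ (fun k : Fin p => θ k.succ) x‖ ^ 2 : ℝ) : ℂ) = ((Real.exp (θ 0) ^ 2 : ℝ) : ℂ) := by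
      rw [hnorm]; simp
    rw [hM, ← Complex.ofReal_re (Real.exp (θ 0) ^ 2), ← h, Complex.ofReal_sum, Finset.mul_sum]
    congr 1
    refine Finset.sum_congr rfl fun x _ => ?_
    rw [hρ, hz]
    simp only [Pi.single_eq_same, map_zero, map_mul, Complex.conj_ofReal, Complex.ofReal_one,
      Complex.ofReal_pow, one_mul, add_zero]
    ring
  · rw [hM, ← Complex.re_ofReal_mul, Finset.mul_sum]
    congr 1
    refine Finset.sum_congr rfl fun x _ => ?_
    rw [hρ, hs, hs, hs0, hs0]
    have := hx x
    have := hc x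
    simp only [map_mul, map_div₀, Complex.conj_ofReal,
      Complex.ofReal_zero, Complex.ofReal_pow, zero_mul, zero_add]
    field_simp
end

section
/- Let d ≥ 1, D > 0, and let Φ : ℝ^d → ℝ be bounded and continuous. Define u : (0, ∞) × ℝ^d → ℝ by u(t, x) = ∫_{ℝ^d} Φ(y) (4πDt)^{−d/2} exp(−‖x − y‖²/(4Dt)) dy. Then for every t > 0 and x ∈ ℝ^d, u is differentiable in t and twice differentiable in x, and ∂u/∂t (t, x) = D Σ_{i=1}^d ∂²u/∂x_i² (t, x); that is, u solves the heat equation ∂_t u = D Δu with diffusion constant D. -/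
open MeasureTheory

/-!
Write `u(t, x) = (4πDt)^(-d/2) ∫ Φ(y) g_a(x - y) dy` with `g_a(z) = exp(-a‖z‖²)` and
`a = 1/(4Dt)`. The functions `g_a`, `Dg_a`, `D²g_a` and `∂g_a/∂a = -‖z‖² g_a` are polynomials of
degree at most two times `g_a`, so each is bounded by a multiple of `exp(-(a/2)‖z‖²)`; as `Φ` is
bounded, derivatives in `x` and in `a` may be taken under the integral sign
(`hasFDerivAt_conv`, `hasDerivAt_gaussConv`), and the second derivative in `x` is continuous
(`continuous_conv`).

The trace of `D²g_a(z)` is `(4a²‖z‖² - 2ad) g_a(z)` (`sum_gauss''`), so both sides of the heat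
equation are combinations of `∫ Φ(y) g_a(x - y) dy` and `∫ Φ(y) ‖x - y‖² g_a(x - y) dy`; the chain
and product rules in `t` give the same coefficients.
-/
namespace HeatKernel

-- The setting Mathlib itself is built with; needed for the normed structure of `E →L[ℝ] E →L[ℝ] ℝ`.
set_option maxSynthPendingDepth 3

variable {E F : Type*} [NormedAddCommGroup E] [InnerProductSpace ℝ E]
  [NormedAddCommGroup F] [NormedSpace ℝ F]

/-! ### Convolution with kernels of Gaussian decay -/

lemma integrable_gaussian [FiniteDimensional ℝ E] [MeasurableSpace E] [BorelSpace E]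
    {b : ℝ} (hb : 0 < b) (x : E) :
    Integrable (fun y : E => Real.exp (-b * ‖x - y‖ ^ 2)) := by
  have h := GaussianFourier.integrable_cexp_neg_mul_sq_norm_add (V := E) (b := (b : ℂ))
    (by simpa using hb) 0 0
  have h2 := h.re
  have h3 : Integrable (fun y : E => Real.exp (-b * ‖y‖ ^ 2)) := by
    refine h2.congr (Filter.Eventually.of_forall fun y => ?_)
    have : (-(b : ℂ) * (‖y‖ : ℂ) ^ 2 + 0 * ((inner ℝ 0 y : ℝ) : ℂ)) = ((-b * ‖y‖ ^ 2 : ℝ) : ℂ) := by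
      push_cast; ring
    simp only [this]
    exact Complex.exp_ofReal_re _
  exact h3.comp_sub_left x

/-- Domination uniform over centres `x` in the unit ball around `x₀`; it follows from
`‖x₀ - y‖² ≤ 2 ‖x₀ - x‖² + 2 ‖x - y‖²`. -/
lemma gaussian_shift_le {E : Type*} [NormedAddCommGroup E] {b : ℝ} (hb : 0 < b)
    {x x₀ : E} (y : E) (hx : x ∈ Metric.ball x₀ 1) :
    Real.exp (-b * ‖x - y‖ ^ 2) ≤ Real.exp b * Real.exp (-(b / 2) * ‖x₀ - y‖ ^ 2) := by
  rw [← Real.exp_add, Real.exp_le_exp]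
  have h1 : ‖x₀ - x‖ < 1 := by rwa [Metric.mem_ball, dist_comm, dist_eq_norm] at hx
  have h2 : ‖x₀ - y‖ ≤ ‖x₀ - x‖ + ‖x - y‖ := norm_sub_le_norm_sub_add_norm_sub _ _ _
  have h3 : ‖x₀ - y‖ ^ 2 ≤ 2 + 2 * ‖x - y‖ ^ 2 := by
    nlinarith [norm_nonneg (x₀ - y), norm_nonneg (x - y), norm_nonneg (x₀ - x),
      sq_nonneg (1 - ‖x - y‖)]
  nlinarith

lemma norm_conv_le {E : Type*} [NormedAddCommGroup E] {Φ : E → ℝ} {M : ℝ}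
    (hM : ∀ y, |Φ y| ≤ M) {K : E → F} {C b : ℝ} (hb : 0 < b)
    (hKb : ∀ z, ‖K z‖ ≤ C * Real.exp (-b * ‖z‖ ^ 2)) {x x₀ : E} (hx : x ∈ Metric.ball x₀ 1)
    (y : E) :
    ‖Φ y • K (x - y)‖ ≤ M * (C * (Real.exp b * Real.exp (-(b / 2) * ‖x₀ - y‖ ^ 2))) := by
  have hM0 : 0 ≤ M := (abs_nonneg _).trans (hM 0)
  have hC : 0 ≤ C := by
    have := (norm_nonneg _).trans (hKb 0)
    simpa using this
  rw [norm_smul]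
  refine mul_le_mul (hM y) ((hKb _).trans ?_) (norm_nonneg _) hM0
  exact mul_le_mul_of_nonneg_left (gaussian_shift_le hb y hx) hC

section Convolution

variable [FiniteDimensional ℝ E] [MeasurableSpace E] [BorelSpace E]
  {Φ : E → ℝ} {M : ℝ}

lemma integrable_conv (hΦ : Continuous Φ) (hM : ∀ y, |Φ y| ≤ M) {K : E → F} {C b : ℝ}
    (hb : 0 < b) (hK : Continuous K) (hKb : ∀ z, ‖K z‖ ≤ C * Real.exp (-b * ‖z‖ ^ 2)) (x : E) :
    Integrable (fun y => Φ y • K (x - y)) := by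
  have hM0 : 0 ≤ M := (abs_nonneg _).trans (hM 0)
  refine (((integrable_gaussian hb x).const_mul C).const_mul M).mono'
    (by fun_prop : Continuous fun y => Φ y • K (x - y)).aestronglyMeasurable
    (Filter.Eventually.of_forall fun y => ?_)
  rw [norm_smul]
  exact mul_le_mul (hM y) (hKb _) (norm_nonneg _) hM0

lemma continuous_conv (hΦ : Continuous Φ) (hM : ∀ y, |Φ y| ≤ M) {K : E → F} {C b : ℝ}
    (hb : 0 < b) (hK : Continuous K) (hKb : ∀ z, ‖K z‖ ≤ C * Real.exp (-b * ‖z‖ ^ 2)) :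
    Continuous (fun x => ∫ y, Φ y • K (x - y)) := by
  rw [continuous_iff_continuousAt]
  intro x₀
  refine continuousAt_of_dominated
    (Filter.Eventually.of_forall fun x => (integrable_conv hΦ hM hb hK hKb x).aestronglyMeasurable)
    (Filter.eventually_of_mem (Metric.ball_mem_nhds x₀ one_pos) fun x hx =>
      Filter.Eventually.of_forall fun y => norm_conv_le hM hb hKb hx y)
    ((((integrable_gaussian (half_pos hb) x₀).const_mul _).const_mul _).const_mul _)
    (Filter.Eventually.of_forall fun y => ?_)
  exact (by fun_prop : Continuous fun x => Φ y • K (x - y)).continuousAt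

/-- Differentiation under the integral sign for a kernel which, together with its derivative, has
Gaussian decay. -/
lemma hasFDerivAt_conv (hΦ : Continuous Φ) (hM : ∀ y, |Φ y| ≤ M) {K : E → F}
    {K' : E → E →L[ℝ] F} {C C' b : ℝ} (hb : 0 < b)
    (hd : ∀ z, HasFDerivAt K (K' z) z) (hK' : Continuous K')
    (hKb : ∀ z, ‖K z‖ ≤ C * Real.exp (-b * ‖z‖ ^ 2))
    (hKb' : ∀ z, ‖K' z‖ ≤ C' * Real.exp (-b * ‖z‖ ^ 2)) (x₀ : E) :
    HasFDerivAt (fun x => ∫ y, Φ y • K (x - y)) (∫ y, Φ y • K' (x₀ - y)) x₀ := by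
  have hK : Continuous K := continuous_iff_continuousAt.2 fun z => (hd z).continuousAt
  refine hasFDerivAt_integral_of_dominated_of_fderiv_le (Metric.ball_mem_nhds x₀ one_pos)
    (F' := fun x y => Φ y • K' (x - y))
    (Filter.Eventually.of_forall fun x => (integrable_conv hΦ hM hb hK hKb x).aestronglyMeasurable)
    (integrable_conv hΦ hM hb hK hKb x₀)
    (integrable_conv hΦ hM hb hK' hKb' x₀).aestronglyMeasurable
    (Filter.Eventually.of_forall fun y x hx => norm_conv_le hM hb hKb' hx y)
    ((((integrable_gaussian (half_pos hb) x₀).const_mul _).const_mul _).const_mul _)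
    (Filter.Eventually.of_forall fun y x _ => ?_)
  exact ((hd (x - y)).comp x ((hasFDerivAt_id x).sub_const y)).const_smul (Φ y)

end Convolution

/-! ### Derivatives of the Gaussian -/

/-- The Gaussian `z ↦ exp (-a ‖z‖²)`. -/
noncomputable def gauss (a : ℝ) (z : E) : ℝ := Real.exp (-a * ‖z‖ ^ 2)

/-- The real inner product as a bilinear map. The type of `innerSL ℝ` is conjugate-linear in the
first argument; this restates it as a linear map, conjugation on `ℝ` being the identity. -/
noncomputable def innerL : E →L[ℝ] E →L[ℝ] ℝ := innerSL ℝ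

@[simp] lemma innerL_apply (v w : E) : innerL v w = inner ℝ v w := rfl

lemma norm_innerL_apply (v : E) : ‖innerL v‖ = ‖v‖ := innerSL_apply_norm ℝ v

/-- The Fréchet derivative of `gauss a`. -/
noncomputable def gauss' (a : ℝ) (z : E) : E →L[ℝ] ℝ := (-2 * a * gauss a z) • innerL z

/-- The second Fréchet derivative of `gauss a`. -/
noncomputable def gauss'' (a : ℝ) (z : E) : E →L[ℝ] E →L[ℝ] ℝ :=
  (-2 * a * gauss a z) • innerL + ((-2 * a) • gauss' a z).smulRight (innerL z)

lemma hasFDerivAt_gauss (a : ℝ) (z : E) : HasFDerivAt (gauss a) (gauss' a z) z := by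
  have h := ((hasStrictFDerivAt_norm_sq z).hasFDerivAt.const_mul (-a)).exp
  refine h.congr_fderiv ?_
  ext v
  simp [gauss', gauss]
  ring

lemma hasFDerivAt_gauss' (a : ℝ) (z : E) :
    HasFDerivAt (gauss' a) (gauss'' a z) z := by
  have h1 := (hasFDerivAt_gauss a z).const_mul (-2 * a)
  exact h1.smul innerL.hasFDerivAt

lemma gauss''_apply (a : ℝ) (z v : E) :
    gauss'' a z v v = (4 * a ^ 2 * inner ℝ z v ^ 2 - 2 * a * ‖v‖ ^ 2) * gauss a z := by
  simp [gauss'', gauss']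
  ring

/-- Half of the Gaussian decay absorbs a quadratic factor. -/
lemma sq_mul_exp_le {a : ℝ} (ha : 0 < a) (r : ℝ) :
    r ^ 2 * Real.exp (-a * r ^ 2) ≤ 2 / a * Real.exp (-(a / 2) * r ^ 2) := by
  have h : Real.exp (-a * r ^ 2) = Real.exp (-(a / 2) * r ^ 2) * Real.exp (-(a / 2) * r ^ 2) := by
    rw [← Real.exp_add]; congr 1; ring
  have h2 : r ^ 2 * Real.exp (-(a / 2) * r ^ 2) ≤ 2 / a := by
    have h3 := Real.add_one_le_exp (a / 2 * r ^ 2)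
    rw [neg_mul, Real.exp_neg, ← div_eq_mul_inv, div_le_div_iff₀ (Real.exp_pos _) ha]
    linarith
  rw [h, ← mul_assoc]
  exact mul_le_mul_of_nonneg_right h2 (Real.exp_pos _).le

lemma norm_gauss_le {E : Type*} [NormedAddCommGroup E] {a : ℝ} (ha : 0 < a) (z : E) :
    ‖gauss a z‖ ≤ 1 * Real.exp (-(a / 2) * ‖z‖ ^ 2) := by
  rw [one_mul, gauss, Real.norm_of_nonneg (Real.exp_pos _).le, Real.exp_le_exp]
  nlinarith [sq_nonneg ‖z‖]

lemma norm_gauss'_le {a : ℝ} (ha : 0 < a) (z : E) :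
    ‖gauss' a z‖ ≤ (2 * a + 4) * Real.exp (-(a / 2) * ‖z‖ ^ 2) := by
  have hg : 0 < gauss a z := Real.exp_pos _
  have h1 := (Real.le_norm_self _).trans (norm_gauss_le ha z)
  have h2 : ‖z‖ ^ 2 * gauss a z ≤ _ := sq_mul_exp_le ha ‖z‖
  have h3 : ‖gauss' a z‖ = 2 * a * gauss a z * ‖z‖ := by
    rw [gauss', norm_smul, norm_innerL_apply, Real.norm_eq_abs, abs_mul, abs_mul,
      abs_of_pos hg, abs_of_pos ha]
    norm_num
  have h4 : ‖z‖ ≤ 1 + ‖z‖ ^ 2 := by nlinarith [sq_nonneg (‖z‖ - 1)]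
  have e : (2 * a + 4) * Real.exp (-(a / 2) * ‖z‖ ^ 2)
      = 2 * a * (1 * Real.exp (-(a / 2) * ‖z‖ ^ 2)
        + 2 / a * Real.exp (-(a / 2) * ‖z‖ ^ 2)) := by
    field_simp; ring
  rw [h3, e]
  calc _ = 2 * a * (gauss a z * ‖z‖) := by ring
    _ ≤ 2 * a * (gauss a z * (1 + ‖z‖ ^ 2)) := by gcongr
    _ ≤ _ := by gcongr; linarith

lemma norm_gauss''_le {a : ℝ} (ha : 0 < a) (z : E) :
    ‖gauss'' a z‖ ≤ (10 * a) * Real.exp (-(a / 2) * ‖z‖ ^ 2) := by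
  have hg : 0 < gauss a z := Real.exp_pos _
  have h1 := (Real.le_norm_self _).trans (norm_gauss_le ha z)
  have h2 : ‖z‖ ^ 2 * gauss a z ≤ _ := sq_mul_exp_le ha ‖z‖
  have e : (10 * a) * Real.exp (-(a / 2) * ‖z‖ ^ 2)
      = 2 * a * (1 * Real.exp (-(a / 2) * ‖z‖ ^ 2))
        + 4 * a ^ 2 * (2 / a * Real.exp (-(a / 2) * ‖z‖ ^ 2)) := by
    field_simp; ring
  rw [e]
  refine ContinuousLinearMap.opNorm_le_bound₂ _ (by positivity) fun v w => ?_
  have hv : gauss'' a z v w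
      = gauss a z * (4 * a ^ 2 * (inner ℝ z v * inner ℝ z w) - 2 * a * inner ℝ v w) := by
    simp [gauss'', gauss']
    ring
  have i1 := abs_real_inner_le_norm z v
  have i2 := abs_real_inner_le_norm z w
  have i3 := abs_real_inner_le_norm v w
  rw [hv, Real.norm_eq_abs, abs_mul, abs_of_pos hg]
  calc _ ≤ gauss a z * (4 * a ^ 2 * ((‖z‖ * ‖v‖) * (‖z‖ * ‖w‖)) + 2 * a * (‖v‖ * ‖w‖)) := by
        gcongr
        refine (abs_sub _ _).trans ?_
        rw [abs_mul, abs_mul (2 * a), abs_mul (inner ℝ z v),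
          abs_of_pos (by positivity : 0 < 4 * a ^ 2), abs_of_pos (by positivity : 0 < 2 * a)]
        gcongr
    _ = (2 * a * gauss a z + 4 * a ^ 2 * (‖z‖ ^ 2 * gauss a z)) * ‖v‖ * ‖w‖ := by ring
    _ ≤ _ := by gcongr

lemma continuous_gauss (a : ℝ) : Continuous (gauss a : E → ℝ) :=
  continuous_iff_continuousAt.2 fun z => (hasFDerivAt_gauss a z).continuousAt

lemma continuous_gauss' (a : ℝ) : Continuous (gauss' a : E → E →L[ℝ] ℝ) :=
  continuous_iff_continuousAt.2 fun z => (hasFDerivAt_gauss' a z).continuousAt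

lemma continuous_gauss'' (a : ℝ) : Continuous (gauss'' a : E → E →L[ℝ] E →L[ℝ] ℝ) := by
  have h := continuous_gauss (E := E) a
  have h' := continuous_gauss' (E := E) a
  have h1 : Continuous fun z : E => (-2 * a * gauss a z) • (innerL : E →L[ℝ] E →L[ℝ] ℝ) :=
    (continuous_const.mul h).smul continuous_const
  have h2 : Continuous fun z : E => (-2 * a) • gauss' a z := h'.const_smul (-2 * a)
  have h3 : Continuous fun z : E =>
      ContinuousLinearMap.smulRightL ℝ E (E →L[ℝ] ℝ) ((-2 * a) • gauss' a z) (innerL z) :=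
    ((ContinuousLinearMap.smulRightL ℝ E (E →L[ℝ] ℝ)).continuous.comp h2).clm_apply
      innerL.continuous
  exact h1.add h3

/-- The Laplacian of the Gaussian, as the trace of its second derivative. -/
lemma sum_gauss'' {ι : Type*} [Fintype ι] (b : OrthonormalBasis ι ℝ E) (a : ℝ) (z : E) :
    ∑ i, gauss'' a z (b i) (b i)
      = (4 * a ^ 2 * ‖z‖ ^ 2 - 2 * a * Fintype.card ι) * gauss a z := by
  simp only [gauss''_apply, b.norm_eq_one, ← Finset.sum_mul, Finset.sum_sub_distrib,
    ← Finset.mul_sum, b.sum_sq_inner_left]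
  simp only [Finset.sum_const, Finset.card_univ, nsmul_eq_mul]
  ring

/-! ### Convolution with the Gaussian -/

section GaussianConvolution

variable [FiniteDimensional ℝ E] [MeasurableSpace E] [BorelSpace E] {Φ : E → ℝ} {M : ℝ}

/-- Differentiation under the integral sign in the width parameter `a`. For parameters larger than
`a / 2` the derivative is dominated by a multiple of `exp (-(a / 4) ‖x - y‖²)`. -/
lemma hasDerivAt_gaussConv (hΦ : Continuous Φ) (hM : ∀ y, |Φ y| ≤ M) {a : ℝ} (ha : 0 < a)
    (x : E) :
    Integrable (fun y => Φ y * (-‖x - y‖ ^ 2 * gauss a (x - y))) ∧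
    HasDerivAt (fun a => ∫ y, Φ y * gauss a (x - y))
      (∫ y, Φ y * (-‖x - y‖ ^ 2 * gauss a (x - y))) a := by
  have hM0 : 0 ≤ M := (abs_nonneg _).trans (hM 0)
  have hg : ∀ c, Continuous fun y => gauss c (x - y) := fun c =>
    (continuous_gauss c).comp (continuous_const.sub continuous_id)
  refine hasDerivAt_integral_of_dominated_loc_of_deriv_le (Ioi_mem_nhds (half_lt_self ha))
    (F := fun a y => Φ y * gauss a (x - y))
    (F' := fun a y => Φ y * (-‖x - y‖ ^ 2 * gauss a (x - y)))
    (bound := fun y => M * (2 / (a / 2) * Real.exp (-(a / 2 / 2) * ‖x - y‖ ^ 2)))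
    (Filter.Eventually.of_forall fun c => (hΦ.mul (hg c)).aestronglyMeasurable)
    (integrable_conv hΦ hM (half_pos ha) (continuous_gauss a) (norm_gauss_le ha) x)
    ?_ (Filter.Eventually.of_forall fun y c hc => ?_)
    (((integrable_gaussian (half_pos (half_pos ha)) x).const_mul _).const_mul _)
    (Filter.Eventually.of_forall fun y c _ => ?_)
  · have := hg a
    exact (by fun_prop : Continuous fun y =>
      Φ y * (-‖x - y‖ ^ 2 * gauss a (x - y))).aestronglyMeasurable
  · rw [norm_mul]
    refine mul_le_mul (hM y) (le_trans ?_ (sq_mul_exp_le (half_pos ha) _)) (norm_nonneg _) hM0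
    rw [norm_mul, norm_neg, norm_pow, norm_norm, gauss, Real.norm_of_nonneg (Real.exp_pos _).le]
    refine mul_le_mul_of_nonneg_left (Real.exp_le_exp.2 ?_) (sq_nonneg _)
    have := Set.mem_Ioi.1 hc
    nlinarith [sq_nonneg ‖x - y‖]
  · have h := (((hasDerivAt_id c).neg.mul_const (‖x - y‖ ^ 2)).exp).const_mul (Φ y)
    refine h.congr_deriv ?_
    simp only [gauss, Pi.neg_apply, id]
    ring

/-- First derivative in `x`. -/
lemma hasFDerivAt_gaussConv (hΦ : Continuous Φ) (hM : ∀ y, |Φ y| ≤ M) {a : ℝ} (ha : 0 < a)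
    (x : E) :
    HasFDerivAt (fun x => ∫ y, Φ y * gauss a (x - y)) (∫ y, Φ y • gauss' a (x - y)) x :=
  hasFDerivAt_conv hΦ hM (half_pos ha) (hasFDerivAt_gauss a) (continuous_gauss' a)
    (norm_gauss_le ha) (norm_gauss'_le ha) x

/-- Second derivative in `x`. -/
lemma hasFDerivAt_gaussConv' (hΦ : Continuous Φ) (hM : ∀ y, |Φ y| ≤ M) {a : ℝ} (ha : 0 < a)
    (x : E) :
    HasFDerivAt (fun x => ∫ y, Φ y • gauss' a (x - y)) (∫ y, Φ y • gauss'' a (x - y)) x :=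
  hasFDerivAt_conv hΦ hM (half_pos ha) (hasFDerivAt_gauss' a) (continuous_gauss'' a)
    (norm_gauss'_le ha) (norm_gauss''_le ha) x

lemma contDiff_gaussConv (hΦ : Continuous Φ) (hM : ∀ y, |Φ y| ≤ M) {a : ℝ} (ha : 0 < a) :
    ContDiff ℝ 2 (fun x => ∫ y, Φ y * gauss a (x - y)) := by
  have h1 : ContDiff ℝ 1 (fun x => ∫ y, Φ y • gauss' a (x - y)) :=
    contDiff_one_iff_hasFDerivAt.2 ⟨_, continuous_conv hΦ hM (half_pos ha)
      (continuous_gauss'' a) (norm_gauss''_le ha), hasFDerivAt_gaussConv' hΦ hM ha⟩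
  exact contDiff_succ_iff_hasFDerivAt (n := 1).2 ⟨_, h1, hasFDerivAt_gaussConv hΦ hM ha⟩

/-- Evaluation `L ↦ L v v` of bilinear forms as a continuous linear functional. -/
noncomputable def evalDiag (v : E) : (E →L[ℝ] E →L[ℝ] ℝ) →L[ℝ] ℝ :=
  (ContinuousLinearMap.apply ℝ ℝ v).comp (ContinuousLinearMap.apply ℝ (E →L[ℝ] ℝ) v)

lemma integrable_gauss''_apply (hΦ : Continuous Φ) (hM : ∀ y, |Φ y| ≤ M) {a : ℝ} (ha : 0 < a)
    (x v : E) : Integrable fun y => Φ y * gauss'' a (x - y) v v := by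
  have hi : Integrable fun y => Φ y • gauss'' a (x - y) :=
    integrable_conv hΦ hM (half_pos ha) (continuous_gauss'' a) (norm_gauss''_le ha) x
  exact (evalDiag v).integrable_comp hi

lemma integral_gauss''_apply (hΦ : Continuous Φ) (hM : ∀ y, |Φ y| ≤ M) {a : ℝ} (ha : 0 < a)
    (x v : E) :
    (∫ y, Φ y • gauss'' a (x - y)) v v = ∫ y, Φ y * gauss'' a (x - y) v v := by
  have hi : Integrable fun y => Φ y • gauss'' a (x - y) :=
    integrable_conv hΦ hM (half_pos ha) (continuous_gauss'' a) (norm_gauss''_le ha) x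
  exact ((evalDiag v).integral_comp_comm hi).symm

lemma iteratedDeriv_gaussConv (hΦ : Continuous Φ) (hM : ∀ y, |Φ y| ≤ M) {a : ℝ} (ha : 0 < a)
    (x v : E) :
    iteratedDeriv 2 (fun s : ℝ => ∫ y, Φ y * gauss a (x + s • v - y)) 0
      = ∫ y, Φ y * gauss'' a (x - y) v v := by
  have hline : ∀ s : ℝ, HasDerivAt (fun s : ℝ => x + s • v) v s := fun s => by
    simpa using ((hasDerivAt_id s).smul_const v).const_add x
  have h1 : deriv (fun s : ℝ => ∫ y, Φ y * gauss a (x + s • v - y))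
      = fun s => (∫ y, Φ y • gauss' a (x + s • v - y)) v := by
    funext s
    exact ((hasFDerivAt_gaussConv hΦ hM ha (x + s • v)).comp_hasDerivAt s (hline s)).deriv
  have h2 : HasFDerivAt (fun x => ∫ y, Φ y • gauss' a (x - y))
      (∫ y, Φ y • gauss'' a (x - y)) (x + (0 : ℝ) • v) := by
    simpa using hasFDerivAt_gaussConv' hΦ hM ha x
  have h3 := h2.comp_hasDerivAt 0 (hline 0)
  have h4 : HasDerivAt (fun s : ℝ => (∫ y, Φ y • gauss' a (x + s • v - y)) v)
      ((∫ y, Φ y • gauss'' a (x - y)) v v) 0 :=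
    (ContinuousLinearMap.apply ℝ ℝ v).hasFDerivAt.comp_hasDerivAt 0 h3
  rw [iteratedDeriv_succ, iteratedDeriv_one, h1, h4.deriv, integral_gauss''_apply hΦ hM ha]

end GaussianConvolution

end HeatKernel

open HeatKernel in
/-- **The heat-kernel convolution solves the heat equation.** For `D > 0` and a bounded
continuous initial datum `Φ : ℝ^d → ℝ`, the function
`u(t, x) = ∫ Φ(y) (4πDt)^{-d/2} exp(-‖x - y‖²/(4Dt)) dy` is differentiable in `t`,
twice differentiable in `x`, and satisfies `∂u/∂t = D ∑ i, ∂²u/∂x i²` for all `t > 0`. -/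
theorem heat_kernel_solves_heat_equation
    (d : ℕ) (hd : 1 ≤ d) (D : ℝ) (hD : 0 < D)
    (Φ : EuclideanSpace ℝ (Fin d) → ℝ)
    (hcont : Continuous Φ) (hbdd : ∃ C, ∀ y, |Φ y| ≤ C)
    (u : ℝ → EuclideanSpace ℝ (Fin d) → ℝ)
    (hu : ∀ t x, u t x = ∫ y : EuclideanSpace ℝ (Fin d),
      Φ y * ((4 * Real.pi * D * t) ^ (-(d : ℝ) / 2) *
        Real.exp (-‖x - y‖ ^ 2 / (4 * D * t)))) :
    ∀ t : ℝ, 0 < t → ∀ x : EuclideanSpace ℝ (Fin d),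
      DifferentiableAt ℝ (fun τ => u τ x) t ∧
      ContDiffAt ℝ 2 (u t) x ∧
      deriv (fun τ => u τ x) t
        = D * ∑ i : Fin d,
            iteratedDeriv 2 (fun s : ℝ => u t (x + s • EuclideanSpace.single i 1)) 0 := by
  intro t ht x
  obtain ⟨M, hM⟩ := hbdd
  have hu' : ∀ t x, u t x = (4 * Real.pi * D * t) ^ (-(d : ℝ) / 2) *
      ∫ y, Φ y * gauss (4 * D * t)⁻¹ (x - y) := by
    intro t x
    rw [hu, ← integral_const_mul]
    congr 1
    funext y
    rw [gauss, show -‖x - y‖ ^ 2 / (4 * D * t) = -(4 * D * t)⁻¹ * ‖x - y‖ ^ 2 by ring]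
    ring
  have ha : 0 < (4 * D * t)⁻¹ := by positivity
  have hpos : 0 < 4 * Real.pi * D * t := by positivity
  set p : ℝ := -(d : ℝ) / 2 with hp
  set c : ℝ := (4 * Real.pi * D * t) ^ p with hc
  set a : ℝ := (4 * D * t)⁻¹ with hadef
  obtain ⟨hI2, hda⟩ := hasDerivAt_gaussConv hcont hM ha x
  have hda' : HasDerivAt (fun τ : ℝ => (4 * D * τ)⁻¹) (-(1 / (4 * D * t ^ 2))) t := by
    have h := (((hasDerivAt_id t).const_mul (4 * D))).inv (by simp [hD.ne', ht.ne'])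
    refine h.congr_deriv ?_
    simp
    field_simp
  have hdc : HasDerivAt (fun τ : ℝ => (4 * Real.pi * D * τ) ^ p) (p / t * c) t := by
    have h := ((hasDerivAt_id t).const_mul (4 * Real.pi * D)).rpow_const (p := p)
      (Or.inl (by simpa using hpos.ne'))
    refine h.congr_deriv ?_
    simp only [id, mul_one]
    rw [Real.rpow_sub_one hpos.ne', ← hc]
    field_simp
  have hdu : HasDerivAt (fun τ => u τ x)
      (p / t * c * (∫ y, Φ y * gauss a (x - y))
        + c * ((∫ y, Φ y * (-‖x - y‖ ^ 2 * gauss a (x - y))) * -(1 / (4 * D * t ^ 2)))) t := by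
    rw [show (fun τ => u τ x) = fun τ => (4 * Real.pi * D * τ) ^ p *
      ∫ y, Φ y * gauss (4 * D * τ)⁻¹ (x - y) from funext fun τ => hu' τ x]
    have hcomp : HasDerivAt (fun τ => ∫ y, Φ y * gauss (4 * D * τ)⁻¹ (x - y)) _ t :=
      HasDerivAt.comp t (h₂ := fun a => ∫ y, Φ y * gauss a (x - y)) hda hda'
    exact hdc.mul hcomp
  refine ⟨hdu.differentiableAt, ?_, ?_⟩
  · have : u t = fun x => c * ∫ y, Φ y * gauss a (x - y) := funext fun x => hu' t x
    rw [this]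
    exact (contDiff_const.mul (contDiff_gaussConv hcont hM ha)).contDiffAt
  · have hi : ∀ i : Fin d,
        iteratedDeriv 2 (fun s : ℝ => u t (x + s • EuclideanSpace.single i 1)) 0
          = c * ∫ y, Φ y * gauss'' a (x - y) (EuclideanSpace.basisFun (Fin d) ℝ i)
              (EuclideanSpace.basisFun (Fin d) ℝ i) := by
      intro i
      rw [← iteratedDeriv_gaussConv hcont hM ha, ← iteratedDeriv_const_mul_field,
        EuclideanSpace.basisFun_apply]
      exact congrArg (fun f => iteratedDeriv 2 f 0) (funext fun s => hu' t _)
    have hI : Integrable fun y => Φ y * gauss a (x - y) :=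
      integrable_conv hcont hM (half_pos ha) (continuous_gauss a) (norm_gauss_le ha) x
    simp_rw [hi]
    rw [hdu.deriv, ← Finset.mul_sum,
      ← integral_finsetSum _ fun i _ => integrable_gauss''_apply hcont hM ha x _]
    simp_rw [← Finset.mul_sum, sum_gauss'', Fintype.card_fin]
    have hsplit : ∫ y, Φ y * ((4 * a ^ 2 * ‖x - y‖ ^ 2 - 2 * a * d) * gauss a (x - y))
        = -(4 * a ^ 2) * (∫ y, Φ y * (-‖x - y‖ ^ 2 * gauss a (x - y)))
          - 2 * a * d * ∫ y, Φ y * gauss a (x - y) := by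
      rw [← integral_const_mul, ← integral_const_mul,
        ← integral_sub (hI2.const_mul _) (hI.const_mul _)]
      congr 1
      funext y
      ring
    rw [hsplit, hp]
    generalize (∫ y, Φ y * (-‖x - y‖ ^ 2 * gauss a (x - y))) = I₂
    generalize (∫ y, Φ y * gauss a (x - y)) = I₀
    rw [hadef]
    clear_value c
    field_simp
    ring
end

section
/- Let d ≥ 1, σ_1, ..., σ_d > 0, r ∈ ℝ, T > 0, and let ρ be a real symmetric d×d matrix with ρ_ii = 1. Let V : [0, T] × (0, ∞)^d → ℝ be twice continuously differentiable and satisfy the multi-asset Black–Scholes PDE: ∂V/∂t + Σ_{i=1}^d r x_i ∂V/∂x_i + (1/2) Σ_{i=1}^d σ_i² x_i² ∂²V/∂x_i² + (1/2) Σ_{i ≠ j} ρ_ij σ_i σ_j x_i x_j ∂²V/∂x_i∂x_j − r V = 0 on [0, T] × (0, ∞)^d. Let a ∈ ℝ^d and b ∈ ℝ satisfy r − σ_i²/2 + a_i σ_i² + Σ_{j ≠ i} ρ_ij σ_i σ_j a_j = 0 for all i and Σ_i a_i (r − σ_i²/2) + (1/2) Σ_i a_i² σ_i² + (1/2) Σ_{i≠j}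 ρ_ij σ_i σ_j a_i a_j − r − b = 0. Define u(t, y) = V(T − t, e^{σ_1 y_1}, ..., e^{σ_d y_d}) · exp(−Σ_{i=1}^d a_i σ_i y_i − b t) for (t, y) ∈ [0, T] × ℝ^d. Then u satisfies the correlated heat equation ∂u/∂t = (1/2) Σ_{i=1}^d ∂²u/∂y_i² + (1/2) Σ_{i ≠ j} ρ_ij ∂²u/∂y_i∂y_j on [0, T] × ℝ^d. -/
open Finset

/-!
For a fixed time, `u` has the form `y ↦ H (e^{σ y}) · exp (-∑ a σ y - c)`, and this form is stable
under `∂/∂y_i`: it replaces `H` by `σ_i x_i ∂_i H - a_i σ_i H` (`fderiv_expGauge`). Applying this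
twice gives every second derivative of `u` in terms of `V` (`fderiv_fderiv_expGauge`). Since
`ρ_ii = 1`, the diagonal and off-diagonal sums merge into one full double sum over `(i, j)`, and
after division by the exponential the claim is a linear combination of the Black–Scholes equation
at `(T - t, e^{σ y})`, of the equations for `a_i` weighted by `x_i ∂_i V` and by `a_i V`, and of the
equation for `b` weighted by `V`; the symmetry of `ρ` identifies the two cross terms `a_i ∂_j V` and `a_j ∂_i V`.
-/

/-- The function `y ↦ H (e^{σ_1 y_1}, ..., e^{σ_d y_d}) · exp (-∑ a_i σ_i y_i - c)`: the exponential
change of variables followed by multiplication by the gauge factor. -/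
noncomputable def expGauge {d : ℕ} (σ a : Fin d → ℝ) (c : ℝ) (H : (Fin d → ℝ) → ℝ)
    (y : Fin d → ℝ) : ℝ :=
  H (fun i => Real.exp (σ i * y i)) * Real.exp (-(∑ i, a i * σ i * y i) - c)

theorem fderiv_expGauge {d : ℕ} (σ a : Fin d → ℝ) (c : ℝ) {H : (Fin d → ℝ) → ℝ}
    (hH : Differentiable ℝ H) (y : Fin d → ℝ) (i : Fin d) :
    fderiv ℝ (expGauge σ a c H) y (Pi.single i 1) =
      expGauge σ a c
        (fun x => σ i * x i * fderiv ℝ H x (Pi.single i 1) - a i * σ i * H x) y := by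
  have hX : HasFDerivAt (fun (z : Fin d → ℝ) (k : Fin d) => Real.exp (σ k * z k))
      (ContinuousLinearMap.pi fun k =>
        Real.exp (σ k * y k) • (σ k • ContinuousLinearMap.proj (R := ℝ) (φ := fun _ => ℝ) k)) y :=
    hasFDerivAt_pi.2 fun k => ((hasFDerivAt_apply k y).const_mul (σ k)).exp
  have hE : HasFDerivAt (fun z : Fin d → ℝ => Real.exp (-(∑ k, a k * σ k * z k) - c))
      (Real.exp (-(∑ k, a k * σ k * y k) - c) •
        -(∑ k, (a k * σ k) • ContinuousLinearMap.proj (R := ℝ) (φ := fun _ => ℝ) k)) y :=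
    ((HasFDerivAt.fun_sum fun k _ =>
      (hasFDerivAt_apply k y).const_mul (a k * σ k)).neg.sub_const c).exp
  have hG := ((hH _).hasFDerivAt.comp y hX).mul hE
  have hdir : (ContinuousLinearMap.pi fun k =>
        Real.exp (σ k * y k) • (σ k • ContinuousLinearMap.proj (R := ℝ) (φ := fun _ => ℝ) k))
      (Pi.single i (1 : ℝ) : Fin d → ℝ)
      = (σ i * Real.exp (σ i * y i)) • (Pi.single i (1 : ℝ) : Fin d → ℝ) := by
    ext k
    by_cases h : k = i
    · subst h; simp [mul_comm]
    · simp [Pi.single_eq_of_ne h]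
  have hsum : (∑ k, (a k * σ k) • ContinuousLinearMap.proj (R := ℝ) (φ := fun _ => ℝ) k)
      (Pi.single i (1 : ℝ) : Fin d → ℝ) = a i * σ i := by
    simp [Pi.single_apply]
  have hG' : HasFDerivAt (expGauge σ a c H) _ y := hG
  rw [hG'.fderiv]
  simp only [add_apply, smul_apply,
    neg_apply, ContinuousLinearMap.comp_apply, hdir, hsum, map_smul,
    smul_eq_mul, Function.comp_apply, expGauge]
  ring

theorem fderiv_fderiv_expGauge {d : ℕ} (σ a : Fin d → ℝ) (c : ℝ) {F : (Fin d → ℝ) → ℝ}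
    (hF : ContDiff ℝ 2 F) (y : Fin d → ℝ) (i j : Fin d) :
    fderiv ℝ (fun z => fderiv ℝ (expGauge σ a c F) z (Pi.single i 1)) y (Pi.single j 1) =
      expGauge σ a c (fun x =>
        (if i = j then σ i * σ j * x i * fderiv ℝ F x (Pi.single i 1) else 0)
        + σ i * σ j * x i * x j *
            fderiv ℝ (fun z => fderiv ℝ F z (Pi.single i 1)) x (Pi.single j 1)
        - a i * σ i * σ j * x j * fderiv ℝ F x (Pi.single j 1)
        - a j * σ j * σ i * x i * fderiv ℝ F x (Pi.single i 1)
        + a i * a j * σ i * σ j * F x) y := by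
  have hF1 : Differentiable ℝ F := hF.differentiable (by norm_num)
  have hP : Differentiable ℝ (fun x => fderiv ℝ F x (Pi.single i 1)) :=
    ((hF.fderiv_right (m := 1) (by norm_num)).clm_apply contDiff_const).differentiable
      (by norm_num)
  have hH : ∀ x, HasFDerivAt
      (fun x : Fin d → ℝ => σ i * x i * fderiv ℝ F x (Pi.single i 1) - a i * σ i * F x) _ x :=
    fun x => ((((hasFDerivAt_apply (𝕜 := ℝ) i x).const_mul (σ i)).mul (hP x).hasFDerivAt).sub
      ((hF1 x).hasFDerivAt.const_mul (a i * σ i)))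
  have h1 : (fun z => fderiv ℝ (expGauge σ a c F) z (Pi.single i 1)) =
      expGauge σ a c
        (fun x => σ i * x i * fderiv ℝ F x (Pi.single i 1) - a i * σ i * F x) :=
    funext fun z => fderiv_expGauge σ a c hF1 z i
  rw [h1, fderiv_expGauge σ a c (fun x => (hH x).differentiableAt)]
  congr 1
  funext x
  rw [(hH x).fderiv]
  simp only [add_apply, sub_apply,
    smul_apply, ContinuousLinearMap.proj_apply, smul_eq_mul, Pi.single_apply]
  by_cases h : i = j
  · subst h
    simp only [if_true]
    ring
  · simp only [h, if_false]
    ring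

theorem sum_diag_add_sum_offDiag {d : ℕ} (f : Fin d → Fin d → ℝ) :
    ∑ i, f i i + ∑ i, ∑ j ∈ univ \ {i}, f i j = ∑ i, ∑ j, f i j := by
  rw [← sum_add_distrib]
  refine sum_congr rfl fun i _ => ?_
  rw [add_comm, ← sum_sdiff (subset_univ {i}), sum_singleton]

/-- The algebraic core. Here `x`, `P`, `Q`, `F`, `D` stand for the values at one point of the space
variable, of the first and second space derivatives of `V`, of `V`, and of `∂V/∂t`. -/
theorem heat_algebra {d : ℕ} (σ a x P : Fin d → ℝ) (ρ Q : Fin d → Fin d → ℝ) (r b F D : ℝ)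
    (hsymm : ∀ i j, ρ i j = ρ j i) (hdiag : ∀ i, ρ i i = 1)
    (hpde : D + ∑ i, r * x i * P i
      + (1 / 2) * ∑ i, ∑ j, ρ i j * σ i * σ j * x i * x j * Q i j - r * F = 0)
    (ha : ∀ i, r - σ i ^ 2 / 2 + ∑ j, ρ i j * σ i * σ j * a j = 0)
    (hb : ∑ i, a i * (r - σ i ^ 2 / 2)
      + (1 / 2) * ∑ i, ∑ j, ρ i j * σ i * σ j * a i * a j - r - b = 0) :
    -D - b * F = (1 / 2) * ∑ i, ∑ j, ρ i j *
      ((if i = j then σ i * σ j * x i * P i else 0) + σ i * σ j * x i * x j * Q i j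
        - a i * σ i * σ j * x j * P j - a j * σ j * σ i * x i * P i
        + a i * a j * σ i * σ j * F) := by
  have hC : ∑ i, ∑ j, ρ i j * (a j * σ j * σ i * x i * P i)
      = -∑ i, r * x i * P i + (1 / 2) * ∑ i, σ i ^ 2 * x i * P i := by
    rw [mul_sum, ← sum_neg_distrib, ← sum_add_distrib]
    refine sum_congr rfl fun i _ => ?_
    have : ∑ j, ρ i j * (a j * σ j * σ i * x i * P i)
        = (∑ j, ρ i j * σ i * σ j * a j) * (x i * P i) := by
      rw [sum_mul]
      exact sum_congr rfl fun j _ => by ring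
    rw [this]
    linear_combination (x i * P i) * ha i
  have hB : ∑ i, ∑ j, ρ i j * (a i * σ i * σ j * x j * P j)
      = ∑ i, ∑ j, ρ i j * (a j * σ j * σ i * x i * P i) := by
    rw [sum_comm]
    exact sum_congr rfl fun i _ => sum_congr rfl fun j _ => by rw [hsymm]
  have hA : ∑ i, ∑ j, ρ i j * (if i = j then σ i * σ j * x i * P i else 0)
      = ∑ i, σ i ^ 2 * x i * P i := by
    refine sum_congr rfl fun i _ => ?_
    simp only [mul_ite, mul_zero, sum_ite_eq, mem_univ, if_true, hdiag]
    ring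
  have hQ : ∑ i, ∑ j, ρ i j * (σ i * σ j * x i * x j * Q i j)
      = ∑ i, ∑ j, ρ i j * σ i * σ j * x i * x j * Q i j :=
    sum_congr rfl fun i _ => sum_congr rfl fun j _ => by ring
  have hF : ∑ i, ∑ j, ρ i j * (a i * a j * σ i * σ j * F)
      = (∑ i, ∑ j, ρ i j * σ i * σ j * a i * a j) * F := by
    simp only [sum_mul]
    exact sum_congr rfl fun i _ => sum_congr rfl fun j _ => by ring
  simp only [mul_add, mul_sub, sum_add_distrib, sum_sub_distrib] at hA hB hC hQ hF ⊢
  rw [hA, hB, hC, hQ, hF]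
  -- Contracting the equations for `a` with `a` turns the linear part of `hb` into a double sum.
  have hS : ∑ i, a i * (r - σ i ^ 2 / 2) = -∑ i, ∑ j, ρ i j * σ i * σ j * a i * a j := by
    rw [← sum_neg_distrib]
    refine sum_congr rfl fun i _ => ?_
    have : ∑ j, ρ i j * σ i * σ j * a i * a j = a i * ∑ j, ρ i j * σ i * σ j * a j := by
      rw [mul_sum]
      exact sum_congr rfl fun j _ => by ring
    rw [this]
    linear_combination a i * ha i
  rw [hS] at hb
  linear_combination (-1) * hpde + F * hb

/-- **Reduction of the multi-asset Black–Scholes PDE to the correlated heat equation.**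
Let `V` be twice continuously differentiable and satisfy the multi-asset Black–Scholes
PDE on `[0, T] × (0, ∞)^d`, and let `a, b` solve the associated algebraic system. Then
`u(t, y) = V(T - t, e^{σ 1 y 1}, ..., e^{σ d y d}) exp(-∑ i, a i σ i y i - b t)`
satisfies the correlated heat equation
`∂u/∂t = (1/2) ∑ i, ∂²u/∂y i² + (1/2) ∑_{i ≠ j} ρ i j ∂²u/∂y i ∂y j` on `[0, T] × ℝ^d`. -/
theorem black_scholes_to_heat_equation
    (d : ℕ) (hd : 1 ≤ d) (σ : Fin d → ℝ) (hσ : ∀ i, 0 < σ i) (r T : ℝ) (hT : 0 < T)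
    (ρ : Matrix (Fin d) (Fin d) ℝ) (hsymm : ρ.IsSymm) (hdiag : ∀ i, ρ i i = 1)
    (V : ℝ → (Fin d → ℝ) → ℝ)
    (hV : ContDiff ℝ 2 (fun q : ℝ × (Fin d → ℝ) => V q.1 q.2))
    (hpde : ∀ t ∈ Set.Icc (0 : ℝ) T, ∀ x : Fin d → ℝ, (∀ i, 0 < x i) →
      deriv (fun τ => V τ x) t
        + ∑ i, r * x i * fderiv ℝ (V t) x (Pi.single i 1)
        + (1 / 2) * ∑ i, σ i ^ 2 * x i ^ 2 *
            fderiv ℝ (fun z => fderiv ℝ (V t) z (Pi.single i 1)) x (Pi.single i 1)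
        + (1 / 2) * ∑ i, ∑ j ∈ univ \ {i}, ρ i j * σ i * σ j * x i * x j *
            fderiv ℝ (fun z => fderiv ℝ (V t) z (Pi.single i 1)) x (Pi.single j 1)
        - r * V t x = 0)
    (a : Fin d → ℝ) (b : ℝ)
    (ha : ∀ i, r - σ i ^ 2 / 2 + a i * σ i ^ 2
      + ∑ j ∈ univ \ {i}, ρ i j * σ i * σ j * a j = 0)
    (hb : ∑ i, a i * (r - σ i ^ 2 / 2) + (1 / 2) * ∑ i, a i ^ 2 * σ i ^ 2
      + (1 / 2) * ∑ i, ∑ j ∈ univ \ {i}, ρ i j * σ i * σ j * a i * a j - r - b = 0)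
    (u : ℝ → (Fin d → ℝ) → ℝ)
    (hu : ∀ t y, u t y = V (T - t) (fun i => Real.exp (σ i * y i)) *
      Real.exp (-(∑ i, a i * σ i * y i) - b * t)) :
    ∀ t ∈ Set.Icc (0 : ℝ) T, ∀ y : Fin d → ℝ,
      deriv (fun τ => u τ y) t
        = (1 / 2) * ∑ i,
            fderiv ℝ (fun z => fderiv ℝ (u t) z (Pi.single i 1)) y (Pi.single i 1)
          + (1 / 2) * ∑ i, ∑ j ∈ univ \ {i}, ρ i j *
              fderiv ℝ (fun z => fderiv ℝ (u t) z (Pi.single i 1)) y (Pi.single j 1) := by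
  intro t ht y
  set x : Fin d → ℝ := fun i => Real.exp (σ i * y i) with hx
  set F : (Fin d → ℝ) → ℝ := V (T - t) with hFdef
  have hF : ContDiff ℝ 2 F :=
    hV.comp (contDiff_const.prodMk contDiff_id : ContDiff ℝ 2 fun z : Fin d → ℝ => (T - t, z))
  have hut : u t = expGauge σ a (b * t) F := funext fun z => hu t z
  have hVt : DifferentiableAt ℝ (fun τ => V τ x) (T - t) :=
    (hV.comp (contDiff_id.prodMk contDiff_const :
      ContDiff ℝ 2 fun τ : ℝ => (τ, x))).differentiable (by norm_num) _
  set E : ℝ := Real.exp (-(∑ i, a i * σ i * y i) - b * t) with hE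
  have hderiv : deriv (fun τ => u τ y) t
      = (-deriv (fun τ => V τ x) (T - t) - b * F x) * E := by
    have h1 : HasDerivAt (fun τ => V (T - τ) x) (-deriv (fun τ => V τ x) (T - t)) t :=
      HasDerivAt.comp_const_sub T t hVt.hasDerivAt
    have h2 : HasDerivAt (fun τ => Real.exp (-(∑ i, a i * σ i * y i) - b * τ)) (E * -(b * 1)) t :=
      (((hasDerivAt_id t).const_mul b).const_sub _).exp
    have h3 : HasDerivAt (fun τ => u τ y) _ t :=
      (h1.mul h2).congr_of_eventuallyEq (Filter.Eventually.of_forall fun τ => hu τ y)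
    rw [h3.deriv]
    ring
  have hmem : T - t ∈ Set.Icc (0 : ℝ) T := ⟨by linarith [ht.2], by linarith [ht.1]⟩
  have hp := hpde (T - t) hmem x fun i => Real.exp_pos _
  have key := heat_algebra σ a x (fun i => fderiv ℝ F x (Pi.single i 1)) ρ
    (fun i j => fderiv ℝ (fun z => fderiv ℝ F z (Pi.single i 1)) x (Pi.single j 1)) r b (F x)
    (deriv (fun τ => V τ x) (T - t)) (fun i j => hsymm.apply j i) hdiag
    (by
      rw [← sum_diag_add_sum_offDiag]
      simp only [hdiag, one_mul]
      simp only [pow_two] at hp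
      simp only [← mul_assoc] at hp ⊢
      linear_combination hp)
    (fun i => by
      rw [← sum_sdiff (subset_univ {i}), sum_singleton, hdiag]
      linear_combination ha i)
    (by
      rw [← sum_diag_add_sum_offDiag]
      have : ∑ i, ρ i i * σ i * σ i * a i * a i = ∑ i, a i ^ 2 * σ i ^ 2 :=
        sum_congr rfl fun i _ => by rw [hdiag]; ring
      rw [this]
      linear_combination hb)
  rw [hderiv, key, hut]
  simp only [fderiv_fderiv_expGauge σ a (b * t) hF]
  have hfull := sum_diag_add_sum_offDiag fun i j => ρ i j * expGauge σ a (b * t) (fun x =>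
        (if i = j then σ i * σ j * x i * fderiv ℝ F x (Pi.single i 1) else 0)
        + σ i * σ j * x i * x j *
            fderiv ℝ (fun z => fderiv ℝ F z (Pi.single i 1)) x (Pi.single j 1)
        - a i * σ i * σ j * x j * fderiv ℝ F x (Pi.single j 1)
        - a j * σ j * σ i * x i * fderiv ℝ F x (Pi.single i 1)
        + a i * a j * σ i * σ j * F x) y
  simp only [hdiag, one_mul] at hfull
  rw [← mul_add, hfull, mul_assoc, sum_mul]
  congr 1
  refine sum_congr rfl fun i _ => ?_
  rw [sum_mul]
  exact sum_congr rfl fun j _ => mul_assoc _ _ _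
end
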